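/- A subspace L ⊆ V ⊕ ∧^k V* is lagrangian (L = L⊥) if and only if the following three conditions hold: L is isotropic, Ann(pr₁(L))° = pr₁(L), and L ∩ ∧^k V* = Ann(pr₁(L)). -/

import Mathlib

/-!
Write `E = pr₁(L)`. For every `L`, the pure forms in `L^⊥` are exactly `Ann(E)`, so a lagrangian `L`
automatically satisfies `L ∩ ∧^k V^* = Ann(E)`; conversely the three conditions give `L^⊥ ⊆ L` by
subtracting from `(X, α) ∈ L^⊥` an element of `L` with the same first component.

The substance is that `Ann(E)° = E` for lagrangian `L`.

* If `Ann(E)` contains some `α ≠ 0`, this holds for any `E` (`mem_of_mem_polarS`): if `X ∉ E` were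
  killed by `Ann(E)`, pick `Y` with `i_Y α ≠ 0` and a functional `f` vanishing on `E` with
  `f X = 1`; then `f ∧ i_Y α` lies in `Ann(E)` but contracts with `X` to `i_Y α ≠ 0`.
* If `Ann(E) = 0`, then `L` is the graph of a skew map `E → ∧^k V^*`, which is `Y ↦ i_Y ω` for some
  `ω ∈ ∧^{k+1} V^*` (`exists_form_of_isotropic`). Every `(X, i_X ω)` is then orthogonal to `L`,
  whence `E = V`.
-/

open Module Submodule

noncomputable section

/-- `∧^m V^*`, modeled as alternating `m`-linear forms on `V`. -/
abbrev Alt (V : Type*) [AddCommGroup V] [Module ℝ V] (m : ℕ) :=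
  V [⋀^Fin m]→ₗ[ℝ] ℝ

/-- The interior product `i_X : ∧^{m+1} V^* → ∧^m V^*`, as a linear map in the form. -/
def iprod (V : Type*) [AddCommGroup V] [Module ℝ V] (m : ℕ) (X : V) :
    Alt V (m + 1) →ₗ[ℝ] Alt V m :=
  AlternatingMap.curryLeftLinearMap.flip X

lemma iprod_add_left {V : Type*} [AddCommGroup V] [Module ℝ V] (m : ℕ) (X Y : V)
    (α : Alt V (m + 1)) : iprod V m (X + Y) α = iprod V m X α + iprod V m Y α := by
  simp [iprod]

lemma iprod_smul_left {V : Type*} [AddCommGroup V] [Module ℝ V] (m : ℕ) (c : ℝ) (X : V)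
    (α : Alt V (m + 1)) : iprod V m (c • X) α = c • iprod V m X α := by
  simp [iprod]

/-- The `∧^m V^*`-valued pairing on `W = V ⊕ ∧^{m+1} V^*`:
`⟨(X,α),(Y,β)⟩ = i_X β + i_Y α`. -/
def pairW (V : Type*) [AddCommGroup V] [Module ℝ V] (m : ℕ)
    (u v : V × Alt V (m + 1)) : Alt V m :=
  iprod V m u.1 v.2 + iprod V m v.1 u.2

lemma pairW_add_left {V : Type*} [AddCommGroup V] [Module ℝ V] (m : ℕ)
    (u u' v : V × Alt V (m + 1)) :
    pairW V m (u + u') v = pairW V m u v + pairW V m u' v := by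
  simp only [pairW, Prod.fst_add, Prod.snd_add, iprod_add_left, map_add]
  abel

lemma pairW_smul_left {V : Type*} [AddCommGroup V] [Module ℝ V] (m : ℕ) (c : ℝ)
    (u v : V × Alt V (m + 1)) :
    pairW V m (c • u) v = c • pairW V m u v := by
  simp only [pairW, Prod.smul_fst, Prod.smul_snd, iprod_smul_left, map_smul, smul_add]

/-- A subspace of `W = V ⊕ ∧^{m+1}V^*` is isotropic if the pairing vanishes on it. -/
def IsIsotropic (V : Type*) [AddCommGroup V] [Module ℝ V] (m : ℕ)
    (L : Submodule ℝ (V × Alt V (m + 1))) : Prop :=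
  ∀ u ∈ L, ∀ v ∈ L, pairW V m u v = 0

/-- The orthogonal `L^⊥` of a subspace `L ⊆ V ⊕ ∧^{m+1}V^*` w.r.t. the pairing. -/
def perpW (V : Type*) [AddCommGroup V] [Module ℝ V] (m : ℕ)
    (L : Submodule ℝ (V × Alt V (m + 1))) : Submodule ℝ (V × Alt V (m + 1)) where
  carrier := {w | ∀ l ∈ L, pairW V m w l = 0}
  add_mem' := by
    intro a b ha hb l hl
    rw [pairW_add_left, ha l hl, hb l hl, add_zero]
  zero_mem' := by
    intro l hl
    simp [pairW, iprod]
  smul_mem' := by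
    intro c a ha l hl
    rw [pairW_smul_left, ha l hl, smul_zero]

/-- The annihilator `Ann(E) ⊆ ∧^{m+1} V^*` of a subspace `E ⊆ V`. -/
def AnnE (V : Type*) [AddCommGroup V] [Module ℝ V] (m : ℕ) (E : Submodule ℝ V) :
    Submodule ℝ (Alt V (m + 1)) where
  carrier := {α | ∀ X ∈ E, iprod V m X α = 0}
  add_mem' := by
    intro a b ha hb X hX
    rw [map_add, ha X hX, hb X hX, add_zero]
  zero_mem' := by intro X hX; simp
  smul_mem' := by
    intro c a ha X hX
    rw [map_smul, ha X hX, smul_zero]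

/-- The annihilator `S° ⊆ V` of a subspace `S ⊆ ∧^{m+1} V^*`. -/
def polarS (V : Type*) [AddCommGroup V] [Module ℝ V] (m : ℕ)
    (S : Submodule ℝ (Alt V (m + 1))) : Submodule ℝ V where
  carrier := {X | ∀ α ∈ S, iprod V m X α = 0}
  add_mem' := by
    intro a b ha hb α hα
    show iprod V m (a + b) α = 0
    rw [iprod_add_left, ha α hα, hb α hα, add_zero]
  zero_mem' := by
    intro α hα
    show iprod V m 0 α = 0
    simp [iprod]
  smul_mem' := by
    intro c a ha α hα
    show iprod V m (c • a) α = 0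
    rw [iprod_smul_left, ha α hα, smul_zero]

/-- The `B`-field transform `e^B (X, α) = (X, α + i_X B)`. -/
def eB (V : Type*) [AddCommGroup V] [Module ℝ V] (m : ℕ) (B : Alt V (m + 2)) :
    (V × Alt V (m + 1)) →ₗ[ℝ] (V × Alt V (m + 1)) :=
  LinearMap.prod (LinearMap.fst ℝ V (Alt V (m + 1)))
    (LinearMap.snd ℝ V (Alt V (m + 1)) + B.curryLeft.comp (LinearMap.fst ℝ V (Alt V (m + 1))))

/-- The projection `pr₁(L) ⊆ V` of a subspace `L ⊆ V ⊕ ∧^{m+1}V^*`. -/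
def pr1 (V : Type*) [AddCommGroup V] [Module ℝ V] (m : ℕ)
    (L : Submodule ℝ (V × Alt V (m + 1))) : Submodule ℝ V :=
  Submodule.map (LinearMap.fst ℝ V (Alt V (m + 1))) L

/-- The projection `pr₂(L) ⊆ ∧^{m+1}V^*` of a subspace `L ⊆ V ⊕ ∧^{m+1}V^*`. -/
def pr2S (V : Type*) [AddCommGroup V] [Module ℝ V] (m : ℕ)
    (L : Submodule ℝ (V × Alt V (m + 1))) : Submodule ℝ (Alt V (m + 1)) :=
  Submodule.map (LinearMap.snd ℝ V (Alt V (m + 1))) L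

/-- `L ∩ V`, viewed as a subspace of `V` (identifying `V` with `V ⊕ 0`). -/
def capV (V : Type*) [AddCommGroup V] [Module ℝ V] (m : ℕ)
    (L : Submodule ℝ (V × Alt V (m + 1))) : Submodule ℝ V :=
  Submodule.comap (LinearMap.inl ℝ V (Alt V (m + 1))) L

/-- `L ∩ ∧^{m+1}V^*`, viewed as a subspace of `∧^{m+1}V^*`
(identifying `∧^{m+1}V^*` with `0 ⊕ ∧^{m+1}V^*`). -/
def capF (V : Type*) [AddCommGroup V] [Module ℝ V] (m : ℕ)
    (L : Submodule ℝ (V × Alt V (m + 1))) : Submodule ℝ (Alt V (m + 1)) :=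
  Submodule.comap (LinearMap.inr ℝ V (Alt V (m + 1))) L

/-- The graph `gr(ω) = {(X, i_X ω) : X ∈ V}` of `ω ∈ ∧^{m+2}V^*`. -/
def grOmega (V : Type*) [AddCommGroup V] [Module ℝ V] (m : ℕ) (ω : Alt V (m + 2)) :
    Submodule ℝ (V × Alt V (m + 1)) :=
  LinearMap.range (LinearMap.prod LinearMap.id ω.curryLeft)

/-- `L` is weakly lagrangian if it is isotropic and `L ∩ V = pr₂(L)°`. -/
def IsWeaklyLagrangian (V : Type*) [AddCommGroup V] [Module ℝ V] (m : ℕ)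
    (L : Submodule ℝ (V × Alt V (m + 1))) : Prop :=
  IsIsotropic V m L ∧ capV V m L = polarS V m (pr2S V m L)


lemma iprod_apply {V : Type*} [AddCommGroup V] [Module ℝ V] {m : ℕ} (X : V)
    (α : Alt V (m + 1)) (v : Fin m → V) : iprod V m X α v = α (Matrix.vecCons X v) := rfl

lemma iprod_self {V : Type*} [AddCommGroup V] [Module ℝ V] {m : ℕ} (X : V)
    (α : Alt V (m + 2)) : iprod V m X (iprod V (m + 1) X α) = 0 :=
  AlternatingMap.curryLeft_same α X

lemma iprod_swap {V : Type*} [AddCommGroup V] [Module ℝ V] {m : ℕ} (X Y : V)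
    (α : Alt V (m + 2)) :
    iprod V m X (iprod V (m + 1) Y α) + iprod V m Y (iprod V (m + 1) X α) = 0 := by
  have h := iprod_self (X + Y) α
  simp only [iprod_add_left, map_add, iprod_self, zero_add, add_zero] at h
  rwa [add_comm]

/-- If `i_X α = 0`, then `α` vanishes as soon as `X` is one of its arguments, in any position. -/
lemma apply_eq_zero_of_iprod_eq_zero {V : Type*} [AddCommGroup V] [Module ℝ V] {m : ℕ} {X : V}
    {α : Alt V (m + 1)} (h : iprod V m X α = 0) (v : Fin (m + 1) → V) (i : Fin (m + 1))
    (hi : v i = X) : α v = 0 := by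
  have hv : v = i.insertNth X (i.removeNth v) := by
    rw [← hi, Fin.insertNth_self_removeNth]
  rw [hv, AlternatingMap.map_insertNth, ← iprod_apply, h]
  simp

/-- The wedge product `f ∧ τ` of a `1`-form with an `m`-form,
`(f ∧ τ)(v₀, …, v_m) = ∑ᵢ (-1)^i f(vᵢ) τ(v₀, …, v̂ᵢ, …, v_m)`. -/
def wedge1 {V : Type*} [AddCommGroup V] [Module ℝ V] {m : ℕ} (f : V →ₗ[ℝ] ℝ) (τ : Alt V m) :
    Alt V (m + 1) :=
  AlternatingMap.alternatizeUncurryFin (f.smulRight τ)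

/-- The Leibniz rule `i_X (f ∧ τ) = f(X) τ - f ∧ i_X τ` in the case `i_X τ = 0`. The latter is
phrased by evaluation so that it makes sense in degree `0` too, where it holds vacuously. -/
lemma iprod_wedge1 {V : Type*} [AddCommGroup V] [Module ℝ V] {m : ℕ} (f : V →ₗ[ℝ] ℝ)
    (τ : Alt V m) (X : V) (h : ∀ (v : Fin m → V) (i : Fin m), v i = X → τ v = 0) :
    iprod V m X (wedge1 f τ) = f X • τ := by
  ext v
  rw [iprod_apply, wedge1, AlternatingMap.alternatizeUncurryFin_apply, Fin.sum_univ_succ,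
    Finset.sum_eq_zero]
  · simp [Matrix.vecCons]
  · intro j _
    -- For `j.succ`, the vector `X` survives as the first argument of `τ`.
    have hm : 0 < m := j.pos
    have : τ (Fin.removeNth j.succ (Matrix.vecCons X v)) = 0 := by
      obtain ⟨d, rfl⟩ : ∃ d, m = d + 1 := ⟨m - 1, by omega⟩
      exact h _ 0 (by simp [Fin.removeNth])
    simp [this]

/-- If `Ann(E) ≠ 0`, then `Ann(E)° ⊆ E`. -/
lemma mem_of_mem_polarS {V : Type*} [AddCommGroup V] [Module ℝ V] {m : ℕ} {E : Submodule ℝ V}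
    {α : Alt V (m + 1)} (hα : α ∈ AnnE V m E) (hα0 : α ≠ 0) {X : V}
    (hX : X ∈ polarS V m (AnnE V m E)) : X ∈ E := by
  by_contra hXE
  obtain ⟨f, hf, hfX⟩ := LinearMap.exists_extend_of_notMem (0 : E →ₗ[ℝ] ℝ) hXE 1
  have hfE : ∀ Z ∈ E, f Z = 0 := fun Z hZ => by simpa using LinearMap.congr_fun hf ⟨Z, hZ⟩
  obtain ⟨Y, hY⟩ : ∃ Y, iprod V m Y α ≠ 0 := by
    by_contra! hall
    exact hα0 (AlternatingMap.ext fun v => apply_eq_zero_of_iprod_eq_zero (hall (v 0)) v 0 rfl)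
  have key : ∀ Z, iprod V m Z α = 0 →
      iprod V m Z (wedge1 f (iprod V m Y α)) = f Z • iprod V m Y α := fun Z hZ =>
    iprod_wedge1 f _ Z fun v i hi =>
      apply_eq_zero_of_iprod_eq_zero hZ (Matrix.vecCons Y v) i.succ (by simpa using hi)
  have hmem : wedge1 f (iprod V m Y α) ∈ AnnE V m E := fun Z hZ => by
    rw [key Z (hα Z hZ), hfE Z hZ, zero_smul]
  have h1 := key X (hX α hα)
  rw [hX _ hmem, hfX, one_smul] at h1
  exact hY h1.symm

/-- An isotropic `L` with `L ∩ ∧^k V^* = 0` is contained in the graph of some `ω ∈ ∧^{k+1} V^*`.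
The form `ω` is built one generator of `L` at a time. -/
lemma exists_form_of_isotropic {V : Type*} [AddCommGroup V] [Module ℝ V] [FiniteDimensional ℝ V]
    {m : ℕ} {L : Submodule ℝ (V × Alt V (m + 1))} (hiso : IsIsotropic V m L)
    (hcap : capF V m L = ⊥) :
    ∃ ω : Alt V (m + 2), ∀ l ∈ L, iprod V (m + 1) l.1 ω = l.2 := by
  classical
  let G : Alt V (m + 2) → Submodule ℝ (V × Alt V (m + 1)) := grOmega V m
  have hG : ∀ ω l, l ∈ G ω ↔ iprod V (m + 1) l.1 ω = l.2 := by
    intro ω l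
    constructor
    · rintro ⟨X, rfl⟩
      rfl
    · intro h
      exact ⟨l.1, Prod.ext rfl h⟩
  have hfst : ∀ a ∈ L, ∀ b ∈ L, a.1 = b.1 → a = b := by
    intro a ha b hb hab
    have h0 : a.2 - b.2 ∈ capF V m L := by
      have : a - b ∈ L := L.sub_mem ha hb
      rwa [show a - b = (0, a.2 - b.2) from Prod.ext (sub_eq_zero.2 hab) rfl] at this
    rw [hcap, mem_bot, sub_eq_zero] at h0
    exact Prod.ext hab h0
  have main : ∀ s : Finset (V × Alt V (m + 1)), (s : Set (V × Alt V (m + 1))) ⊆ L →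
      ∃ ω, span ℝ (s : Set (V × Alt V (m + 1))) ≤ G ω := by
    intro s
    induction s using Finset.induction_on with
    | empty => exact fun _ => ⟨0, by simp⟩
    | insert l s _ ih =>
      intro hs
      rw [Finset.coe_insert, Set.insert_subset_iff] at hs
      obtain ⟨hl, hsL⟩ := hs
      obtain ⟨ω, hω⟩ := ih hsL
      have hspan : span ℝ (s : Set (V × Alt V (m + 1))) ≤ L := span_le.2 hsL
      by_cases he : l.1 ∈ pr1 V m (span ℝ (s : Set (V × Alt V (m + 1))))
      · -- By injectivity of `pr₁` on `L`, `l` is already in the span.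
        obtain ⟨l', hl', hl1⟩ := he
        have hll : l = l' := hfst l hl l' (hspan hl') hl1.symm
        refine ⟨ω, ?_⟩
        rw [Finset.coe_insert, span_le, Set.insert_subset_iff]
        exact ⟨hll ▸ hω hl', subset_span.trans hω⟩
      · -- Correct `ω` by `f ∧ τ`, where `τ` is the error of `ω` at the new generator.
        obtain ⟨f, hf, hfl⟩ := LinearMap.exists_extend_of_notMem
          (0 : pr1 V m (span ℝ (s : Set (V × Alt V (m + 1)))) →ₗ[ℝ] ℝ) he 1
        set τ : Alt V (m + 1) := l.2 - iprod V (m + 1) l.1 ω with hτ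
        have hτl : iprod V m l.1 τ = 0 := by
          have h2 : iprod V m l.1 l.2 + iprod V m l.1 l.2 = 0 := hiso l hl l hl
          rw [hτ, map_sub, iprod_self, sub_zero]
          rw [← two_smul ℝ] at h2
          exact (smul_eq_zero.1 h2).resolve_left two_ne_zero
        have key : ∀ Z, iprod V m Z τ = 0 →
            iprod V (m + 1) Z (wedge1 f τ) = f Z • τ := fun Z hZ =>
          iprod_wedge1 f τ Z fun v i hi => apply_eq_zero_of_iprod_eq_zero hZ v i hi
        refine ⟨ω + wedge1 f τ, ?_⟩
        rw [Finset.coe_insert, span_le, Set.insert_subset_iff]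
        constructor
        · rw [SetLike.mem_coe, hG, map_add, key _ hτl, hfl, one_smul, hτ]
          abel
        · intro l' hl'
          have hls := subset_span (R := ℝ) hl'
          have hω' := (hG ω l').1 (hω hls)
          have hf0 : f l'.1 = 0 := by
            simpa using LinearMap.congr_fun hf ⟨l'.1, ⟨l', hls, rfl⟩⟩
          have hτ' : iprod V m l'.1 τ = 0 := by
            have h2 : iprod V m l.1 l'.2 + iprod V m l'.1 l.2 = 0 := hiso l hl l' (hsL hl')
            have h3 := iprod_swap l.1 l'.1 ω
            rw [hω'] at h3
            rw [hτ, map_sub, sub_eq_zero]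
            exact add_left_cancel (h2.trans h3.symm)
          rw [SetLike.mem_coe, hG, map_add, key _ hτ', hω', hf0, zero_smul, add_zero]
  -- `L` embeds into `V` by `pr₁`, hence is finite-dimensional.
  have hinj : Function.Injective ((LinearMap.fst ℝ V (Alt V (m + 1))).comp L.subtype) :=
    fun a b hab => Subtype.ext (hfst a a.2 b b.2 hab)
  have : Module.Finite ℝ L := Module.Finite.of_injective _ hinj
  obtain ⟨s, hs⟩ : L.FG := FG.of_finite
  obtain ⟨ω, hω⟩ := main s (fun x hx => hs ▸ subset_span hx)
  exact ⟨ω, fun l hl => (hG ω l).1 (hω (hs.symm ▸ hl))⟩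

/-- The pure forms in `L^⊥` are those annihilating `pr₁(L)`. -/
lemma inr_mem_perpW {V : Type*} [AddCommGroup V] [Module ℝ V] {m : ℕ}
    (L : Submodule ℝ (V × Alt V (m + 1))) (α : Alt V (m + 1)) :
    ((0 : V), α) ∈ perpW V m L ↔ α ∈ AnnE V m (pr1 V m L) := by
  have h : ∀ l : V × Alt V (m + 1), pairW V m ((0 : V), α) l = iprod V m l.1 α := by
    intro l
    simp [pairW, iprod]
  constructor
  · rintro hα _ ⟨l, hl, rfl⟩
    exact (h l).symm.trans (hα l hl)
  · intro hα l hl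
    exact (h l).trans (hα l.1 ⟨l, hl, rfl⟩)

/-- `L ⊆ V ⊕ ∧^k V^*` is lagrangian iff it is isotropic,
`Ann(pr₁(L))° = pr₁(L)`, and `L ∩ ∧^k V^* = Ann(pr₁(L))`.
(Here the `k` of the statement is `m + 1`.) -/
theorem stmt_8 {V : Type*} [AddCommGroup V] [Module ℝ V] [FiniteDimensional ℝ V]
    (m : ℕ) (hmn : m + 1 ≤ finrank ℝ V - 1)
    (L : Submodule ℝ (V × Alt V (m + 1))) :
    L = perpW V m L ↔
      (IsIsotropic V m L ∧
        polarS V m (AnnE V m (pr1 V m L)) = pr1 V m L ∧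
        capF V m L = AnnE V m (pr1 V m L)) := by
  constructor
  · intro hL
    have hiso : IsIsotropic V m L := fun u hu v hv => by
      rw [hL] at hu
      exact hu v hv
    have hcap : capF V m L = AnnE V m (pr1 V m L) := by
      ext α
      rw [← inr_mem_perpW, ← hL]
      rfl
    refine ⟨hiso, le_antisymm ?_ fun X hX α hα => hα X hX, hcap⟩
    intro X hX
    by_cases h0 : AnnE V m (pr1 V m L) = ⊥
    · obtain ⟨ω, hω⟩ := exists_form_of_isotropic hiso (hcap.trans h0)
      have hmem : (X, iprod V (m + 1) X ω) ∈ perpW V m L := fun l hl => by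
        rw [pairW, ← hω l hl]
        exact iprod_swap X l.1 ω
      rw [← hL] at hmem
      exact ⟨_, hmem, rfl⟩
    · obtain ⟨α, hα, hα0⟩ := exists_mem_ne_zero_of_ne_bot h0
      exact mem_of_mem_polarS hα hα0 hX
  · rintro ⟨hiso, hpol, hcap⟩
    refine le_antisymm (fun u hu v hv => hiso u hu v hv) fun w hw => ?_
    have hw1 : w.1 ∈ pr1 V m L := by
      rw [← hpol, ← hcap]
      intro β hβ
      simpa [pairW, iprod] using hw (0, β) hβ
    obtain ⟨l, hl, hlw⟩ := hw1
    have hdiff : w - l ∈ perpW V m L :=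
      (perpW V m L).sub_mem hw fun v hv => hiso l hl v hv
    have heq : w - l = (0, w.2 - l.2) := Prod.ext (sub_eq_zero.2 hlw.symm) rfl
    rw [heq, inr_mem_perpW, ← hcap] at hdiff
    have hd : w - l ∈ L := heq ▸ hdiff
    simpa using L.add_mem hd hl

end
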